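/- arXiv:2604.23863 — 3 statements merged into one kernel-verified Lean document; each statement's English description precedes it below -/
import Mathlib

section
/- The safe set S is the maximal control-invariant subset of the constraint set: (i) S ⊆ {x | 0 ≤ l x}; (ii) S is control invariant; and (iii) every control-invariant set A with A ⊆ {x | 0 ≤ l x} satisfies A ⊆ S. Consequently S equals the union of all control-invariant subsets of {x | 0 ≤ l x}. -/
/-- Discrete-time trajectory under dynamics `f`, initial state `x`, controls `u`. -/
def traj {X U : Type*} (f : X → U → X) (x : X) (u : ℕ → U) : ℕ → X
  | 0 => x
  | n + 1 => f (traj f x u n) (u n)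

/-- The safe set: states from which some control sequence keeps `l ≥ 0` forever. -/
def safeSet {X U : Type*} (f : X → U → X) (l : X → ℝ) : Set X :=
  {x | ∃ u : ℕ → U, ∀ n : ℕ, 0 ≤ l (traj f x u n)}

section ControlInvariance

variable {X U : Type*} {f : X → U → X} {l : X → ℝ} {A : Set X}

theorem traj_tail (f : X → U → X) (x : X) (u : ℕ → U) (n : ℕ) :
    traj f (f x (u 0)) (fun k => u (k + 1)) n = traj f x u (n + 1) := by
  induction n with
  | zero => rfl
  | succ n ih => exact congrArg (f · (u (n + 1))) ih

theorem traj_feedback (f : X → U → X) (π : X → U) (x : X) (n : ℕ) :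
    traj f x (fun k => π ((fun y => f y (π y))^[k] x)) n = (fun y => f y (π y))^[n] x := by
  induction n with
  | zero => rfl
  | succ n ih => rw [traj, ih, Function.iterate_succ_apply']

/-- Control invariance of `A` under the dynamics `f`: at every state of `A` some control keeps
the next state in `A`. The control may depend on the state. -/
def IsControlInvariant (f : X → U → X) (A : Set X) : Prop :=
  ∀ x ∈ A, ∃ v : U, f x v ∈ A

theorem IsControlInvariant.exists_forall_traj_mem (hA : IsControlInvariant f A) {x : X}
    (hx : x ∈ A) : ∃ u : ℕ → U, ∀ n, traj f x u n ∈ A := by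
  have : Nonempty U := (hA x hx).nonempty
  choose! π hπ using hA
  have mapsTo_closedLoop : Set.MapsTo (fun y => f y (π y)) A A := hπ
  refine ⟨fun k => π ((fun y => f y (π y))^[k] x), fun n => ?_⟩
  rw [traj_feedback]
  exact mapsTo_closedLoop.iterate n hx

theorem safeSet_subset_constraint : safeSet f l ⊆ {x | 0 ≤ l x} :=
  fun _ ⟨_, hu⟩ => hu 0

theorem isControlInvariant_safeSet : IsControlInvariant f (safeSet f l) := by
  rintro x ⟨u, hu⟩
  refine ⟨u 0, fun k => u (k + 1), fun n => ?_⟩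
  rw [traj_tail]
  exact hu (n + 1)

theorem IsControlInvariant.subset_safeSet (hA : IsControlInvariant f A)
    (hl : A ⊆ {x | 0 ≤ l x}) : A ⊆ safeSet f l := by
  intro x hx
  obtain ⟨u, hu⟩ := hA.exists_forall_traj_mem hx
  exact ⟨u, fun n => hl (hu n)⟩

theorem isGreatest_safeSet (f : X → U → X) (l : X → ℝ) :
    IsGreatest {A | IsControlInvariant f A ∧ A ⊆ {x | 0 ≤ l x}} (safeSet f l) :=
  ⟨⟨isControlInvariant_safeSet, safeSet_subset_constraint⟩, fun _ hA => hA.1.subset_safeSet hA.2⟩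

end ControlInvariance

/-- The safe set is the maximal control-invariant subset of the constraint set, and it
equals the union of all control-invariant subsets of the constraint set. -/
theorem safeSet_maximal_control_invariant {X U : Type*} (f : X → U → X) (l : X → ℝ) :
    (safeSet f l ⊆ {x | 0 ≤ l x}) ∧
    (∀ x ∈ safeSet f l, ∃ v : U, f x v ∈ safeSet f l) ∧
    (∀ A : Set X, (∀ x ∈ A, ∃ v : U, f x v ∈ A) → A ⊆ {x | 0 ≤ l x} → A ⊆ safeSet f l) ∧
    safeSet f l = ⋃₀ {A : Set X | (∀ x ∈ A, ∃ v : U, f x v ∈ A) ∧ A ⊆ {x | 0 ≤ l x}} := by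
  refine ⟨safeSet_subset_constraint, isControlInvariant_safeSet, ?_, ?_⟩
  · exact fun A => IsControlInvariant.subset_safeSet
  · exact (isGreatest_safeSet f l).isLUB.sSup_eq.symm
end

section
/- The feasible set of the Safety Value MPC equals the safe set: for every planning horizon h : ℕ, the set of MPC-feasible states is exactly S, i.e. {x | ∃ u : ℕ → U, (∀ k < h, 0 ≤ l (traj x u k)) ∧ traj x u h ∈ S} = S. -/
/-- MPC feasibility for planning horizon `h`: some control keeps the constraint satisfied
for the first `h` steps and steers the terminal state into the safe set. -/
def MPCFeasible {X U : Type*} (f : X → U → X) (l : X → ℝ) (h : ℕ) (x : X) : Prop :=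
  ∃ u : ℕ → U, (∀ k < h, 0 ≤ l (traj f x u k)) ∧ traj f x u h ∈ safeSet f l

section

variable {X U : Type*} {f : X → U → X} {l : X → ℝ} {x : X} {u : ℕ → U}

theorem traj_add (f : X → U → X) (x : X) (u : ℕ → U) (n m : ℕ) :
    traj f x u (n + m) = traj f (traj f x u m) (fun k => u (k + m)) n := by
  induction n with
  | zero => rw [Nat.zero_add, traj]
  | succ n ih => rw [Nat.succ_add, traj, traj, ih]

theorem traj_mem_safeSet (hu : ∀ n, 0 ≤ l (traj f x u n)) (m : ℕ) :
    traj f x u m ∈ safeSet f l :=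
  ⟨fun k => u (k + m), fun n => traj_add f x u n m ▸ hu (n + m)⟩

theorem mem_safeSet_of_step_mem {a : U} (hx : 0 ≤ l x) (ha : f x a ∈ safeSet f l) :
    x ∈ safeSet f l := by
  obtain ⟨v, hv⟩ := ha
  let w : ℕ → U := fun n => Nat.casesOn n a v
  have traj_w_succ (n : ℕ) : traj f x w (n + 1) = traj f (f x a) v n := traj_add f x w n 1
  refine ⟨w, fun n => ?_⟩
  cases n with
  | zero => exact hx
  | succ n => exact (traj_w_succ n).symm ▸ hv n

-- Descending along the trajectory replaces splicing two control sequences at time `h`: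
-- each step back only prepends one control to a safe sequence.
theorem mem_safeSet_of_traj_mem {h : ℕ} (hu : ∀ k < h, 0 ≤ l (traj f x u k))
    (hterminal : traj f x u h ∈ safeSet f l) : x ∈ safeSet f l := by
  induction h with
  | zero => exact hterminal
  | succ h ih =>
    have traj_h_mem : traj f x u h ∈ safeSet f l :=
      mem_safeSet_of_step_mem (hu h h.lt_succ_self) hterminal
    exact ih (fun k hk => hu k (hk.trans h.lt_succ_self)) traj_h_mem

end

/-- The feasible set of the Safety Value MPC equals the safe set, for every horizon. -/
theorem mpcFeasible_set_eq_safeSet {X U : Type*} (f : X → U → X) (l : X → ℝ) (h : ℕ) :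
    {x : X | ∃ u : ℕ → U, (∀ k < h, 0 ≤ l (traj f x u k)) ∧ traj f x u h ∈ safeSet f l}
      = safeSet f l := by
  ext x
  constructor
  · rintro ⟨u, hu, hterminal⟩
    exact mem_safeSet_of_traj_mem hu hterminal
  · rintro ⟨u, hu⟩
    exact ⟨u, fun k _ => hu k, traj_mem_safeSet hu h⟩
end

section
/- Closed-loop safety under arbitrary feasible plans: let h hc : ℕ with 0 < hc and hc ≤ h, and let x : ℕ → X and p : ℕ → (ℕ → U) satisfy, for every j: 0 ≤ l (traj (x j) (p j) k) for all k < h, traj (x j) (p j) h ∈ S, and x (j+1) = traj (x j) (p j) hc. Then every closed-loop state remains in the safe set, x j ∈ S for all j, and every executed intermediate state satisfies the constraint: 0 ≤ l (traj (x j) (p j) k) for all j and all k ≤ hc. -/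
/-!
A state is safe iff it satisfies the constraint and some control leads to a safe state. Walking
backwards along a feasible plan from its safe terminal state therefore shows that every state of
the plan is safe, including those that are executed before replanning.
-/

section SafeSet

variable {X U : Type*} {f : X → U → X} {l : X → ℝ}

theorem traj_succ' (f : X → U → X) (x : X) (u : ℕ → U) (n : ℕ) :
    traj f x u (n + 1) = traj f (f x (u 0)) (fun k => u (k + 1)) n := by
  induction n with
  | zero => rfl
  | succ n ih => exact congrArg (f · (u (n + 1))) ih

theorem mem_safeSet_iff_exists_step {x : X} :
    x ∈ safeSet f l ↔ 0 ≤ l x ∧ ∃ a : U, f x a ∈ safeSet f l := by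
  constructor
  · rintro ⟨u, hu⟩
    exact ⟨hu 0, u 0, fun k => u (k + 1), fun n => traj_succ' f x u n ▸ hu (n + 1)⟩
  · rintro ⟨hx, a, v, hv⟩
    let u : ℕ → U
      | 0 => a
      | n + 1 => v n
    refine ⟨u, fun n => ?_⟩
    cases n with
    | zero => exact hx
    | succ n => exact (traj_succ' f x u n).symm ▸ hv n

theorem closed_loop_safety_general {h : ℕ} {x : X} {u : ℕ → U}
    (hCons : ∀ k < h, 0 ≤ l (traj f x u k)) (hEnd : traj f x u h ∈ safeSet f l)
    {k : ℕ} (hk : k ≤ h) : traj f x u k ∈ safeSet f l := by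
  induction hk using Nat.decreasingInduction with
  | self => exact hEnd
  | of_succ k hk next_safe =>
    exact mem_safeSet_iff_exists_step.mpr ⟨hCons k hk, u k, next_safe⟩

end SafeSet

/-- Closed-loop safety under arbitrary feasible plans: if at every step a feasible plan is
executed for `hc` controls (with `0 < hc ≤ h`), then every closed-loop state remains in the
safe set and every executed intermediate state satisfies the constraint. -/
theorem closed_loop_safety {X U : Type*} (f : X → U → X) (l : X → ℝ)
    (h hc : ℕ) (hpos : 0 < hc) (hhc : hc ≤ h)
    (x : ℕ → X) (p : ℕ → (ℕ → U))
    (hCons : ∀ j : ℕ, ∀ k < h, 0 ≤ l (traj f (x j) (p j) k))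
    (hEnd : ∀ j : ℕ, traj f (x j) (p j) h ∈ safeSet f l)
    (hStep : ∀ j : ℕ, x (j + 1) = traj f (x j) (p j) hc) :
    (∀ j : ℕ, x j ∈ safeSet f l) ∧
    (∀ j : ℕ, ∀ k ≤ hc, 0 ≤ l (traj f (x j) (p j) k)) :=
  ⟨fun j => closed_loop_safety_general (hCons j) (hEnd j) h.zero_le, fun j _ hk =>
    (mem_safeSet_iff_exists_step.mp
      (closed_loop_safety_general (hCons j) (hEnd j) (hk.trans hhc))).1⟩
end
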